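/- Let A and B be the companion matrices of f(x) = (x-1)^6 and g(x) = (x+1)^2(x^2+x+1)(x^2+1) respectively, regarded as elements of GL(6,ℤ). Then the elements t = A⁻¹B and r = A⁻¹BA both have infinite order, the subgroup of GL(6,ℤ) generated by A and B equals the subgroup generated by t and r, and this group is the internal free product of the cyclic subgroups ⟨t⟩ and ⟨r⟩; in particular, the hypergeometric group Γ(α,β) with α = (0,0,0,0,0,0) and β = (1/2,1/2,1/3,2/3,1/4,3/4) is isomorphic to ℤ * ℤ, a free group of rank 2. -/

import Mathlib

/-!
Write `T = A⁻¹B` and `S = -B`. The matrix `T` is the transvection `x ↦ x + x₅ u`, and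
`A⁻¹BA = TBT⁻¹`, so it is enough to show that `T` and `B` generate a free group. This is a
ping-pong argument on `C ∪ -C`, for a polyhedral cone `C ⊆ ℤ⁶`; being symmetric, this set does
not distinguish `B` from `S`.

* The sum of coordinates `σ` satisfies `0 < σ x < 24 x₅` on `C`, while `T ^ n` replaces `σ x` by
  `σ x - 24 n x₅` and fixes `x₅`. So no nontrivial power of `T` maps a point of `C ∪ -C` back
  into it.
* If `x ∈ C`, then `S ^ m` maps `x₅ u ± x` and `u` into `C` for every `m ≥ 1`, hence also
  `± T ^ n x` for `± n ≥ 1`. Only finitely many `m` matter, because `S ^ 12 - 1` has rank one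
  and its image is spanned by a vector of `C` fixed by `S`.
* Negative powers of `S` are reduced to positive ones by an involution which preserves `C` and
  conjugates `S` and `T` to their inverses.
-/

open Matrix

/-- The companion matrix of `f(x) = (x-1)^6 = x^6 - 6x^5 + 15x^4 - 20x^3 + 15x^2 - 6x + 1`. -/
def companionF : Matrix (Fin 6) (Fin 6) ℤ :=
  !![0,0,0,0,0,-1; 1,0,0,0,0,6; 0,1,0,0,0,-15; 0,0,1,0,0,20; 0,0,0,1,0,-15; 0,0,0,0,1,6]

/-- The companion matrix of `g(x) = (x+1)^2(x^2+x+1)(x^2+1) = x^6 + 3x^5 + 5x^4 + 6x^3 + 5x^2 + 3x + 1`. -/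
def companionG : Matrix (Fin 6) (Fin 6) ℤ :=
  !![0,0,0,0,0,-1; 1,0,0,0,0,-3; 0,1,0,0,0,-5; 0,0,1,0,0,-6; 0,0,0,1,0,-5; 0,0,0,0,1,-3]

open scoped Pointwise

section FreeProducts

variable {G : Type*} [Group G]

theorem injective_freeGroupLift_of_ping_pong {ι α : Type*} [Nontrivial ι] [MulAction G α]
    (a : ι → G) (X : ι → Set α) (hne : ∀ i, (X i).Nonempty)
    (hdisj : Pairwise fun i j => Disjoint (X i) (X j))
    (hpp : Pairwise fun i j => ∀ n : ℤ, n ≠ 0 → a i ^ n • X j ⊆ X i) :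
    Function.Injective (FreeGroup.lift a) := by
  have hlift : FreeGroup.lift a =
      (Monoid.CoprodI.lift fun i => FreeGroup.lift fun _ : Unit => a i).comp
        (freeGroupEquivCoprodI (ι := ι)).toMonoidHom := by
    ext i
    simp
  have hcard : 3 ≤ Cardinal.mk (FreeGroup Unit) := by
    rw [FreeGroup.freeGroupUnitEquivInt.cardinal_eq, Cardinal.mk_denumerable]
    exact (Cardinal.natCast_lt_aleph0 (n := 3)).le
  rw [hlift, MonoidHom.coe_comp]
  refine .comp ?_ (MulEquiv.injective freeGroupEquivCoprodI)
  refine Monoid.CoprodI.lift_injective_of_ping_pong _ (.inr ⟨Classical.arbitrary ι, hcard⟩) X hne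
    hdisj fun i j hij g hg => ?_
  obtain ⟨n, rfl⟩ := FreeGroup.freeGroupUnitEquivInt.symm.surjective g
  have hn : n ≠ 0 := by
    rintro rfl
    exact hg (zpow_zero _)
  change FreeGroup.lift (fun _ => a i) (FreeGroup.of () ^ n) • X j ⊆ X i
  rw [map_zpow, FreeGroup.lift_apply_of]
  exact hpp hij n hn

theorem injective_freeGroupLift_pair_of_ping_pong {α : Type*} [MulAction G α] {a b : G}
    {X : Set α} (hX : X.Nonempty) (ha : ∀ n : ℤ, n ≠ 0 → Disjoint (a ^ n • X) X)
    (hb : ∀ m n : ℤ, m ≠ 0 → n ≠ 0 → b ^ m • a ^ n • X ⊆ X) :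
    Function.Injective (FreeGroup.lift ![a, b]) := by
  have hdisj : Disjoint (⋃ n : {n : ℤ // n ≠ 0}, a ^ (n : ℤ) • X) X :=
    Set.disjoint_iUnion_left.2 fun n => ha n n.2
  refine injective_freeGroupLift_of_ping_pong ![a, b]
    ![⋃ n : {n : ℤ // n ≠ 0}, a ^ (n : ℤ) • X, X] ?_ ?_ ?_
  · simpa [Fin.forall_fin_two, hX] using ⟨1, one_ne_zero⟩
  · simpa [Pairwise, Fin.forall_fin_two, disjoint_comm] using hdisj
  · simp only [Pairwise, Fin.forall_fin_two, ne_eq, not_true, IsEmpty.forall_iff]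
    refine ⟨⟨trivial, fun _ n hn => Set.subset_iUnion_of_subset ⟨n, hn⟩ subset_rfl⟩,
      fun _ m hm => ?_, trivial⟩
    rw [cons_val_zero, Set.smul_set_iUnion]
    exact Set.iUnion_subset fun n => hb m n hm n.2

theorem injective_freeGroupLift_conj {ι : Type*} {a : ι → G}
    (h : Function.Injective (FreeGroup.lift a)) (g : G) :
    Function.Injective (FreeGroup.lift fun i => g * a i * g⁻¹) := by
  have hlift : FreeGroup.lift (fun i => g * a i * g⁻¹) =
      (MulAut.conj g).toMonoidHom.comp (FreeGroup.lift a) := by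
    ext i
    simp
  rw [hlift, MonoidHom.coe_comp]
  exact (MulAut.conj g).injective.comp h

theorem not_isOfFinOrder_of_injective_freeGroupLift {ι : Type*} {a : ι → G}
    (h : Function.Injective (FreeGroup.lift a)) (i : ι) : ¬ IsOfFinOrder (a i) := by
  have hof := not_isOfFinOrder_of_isMulTorsionFree (FreeGroup.of_ne_one i)
  rwa [← h.isOfFinOrder_iff, FreeGroup.lift_apply_of] at hof

theorem injective_coprodLift_zpowers {x y : G}
    (h : Function.Injective (FreeGroup.lift ![x, y])) :
    Function.Injective (Monoid.Coprod.lift (Subgroup.zpowers x).subtype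
      (Subgroup.zpowers y).subtype) := by
  let s : Subgroup.zpowers x := ⟨x, Subgroup.mem_zpowers x⟩
  let t : Subgroup.zpowers y := ⟨y, Subgroup.mem_zpowers y⟩
  let F : FreeGroup (Fin 2) →* Monoid.Coprod (Subgroup.zpowers x) (Subgroup.zpowers y) :=
    FreeGroup.lift ![Monoid.Coprod.inl s, Monoid.Coprod.inr t]
  have hF : (Monoid.Coprod.lift (Subgroup.zpowers x).subtype (Subgroup.zpowers y).subtype).comp F =
      FreeGroup.lift ![x, y] := by
    ext i
    fin_cases i <;> simp [F, s, t]
  have hsurj : Function.Surjective F := by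
    rw [← MonoidHom.range_eq_top, eq_top_iff, ← Monoid.Coprod.range_inl_sup_range_inr]
    refine sup_le ?_ ?_ <;> rintro _ ⟨⟨_, n, rfl⟩, rfl⟩
    · exact ⟨FreeGroup.of 0 ^ n, (F.map_zpow _ n).trans
        (map_zpow (Monoid.Coprod.inl (N := Subgroup.zpowers y)) s n).symm⟩
    · exact ⟨FreeGroup.of 1 ^ n, (F.map_zpow _ n).trans
        (map_zpow (Monoid.Coprod.inr (M := Subgroup.zpowers x)) t n).symm⟩
  rw [← hF, MonoidHom.coe_comp] at h
  exact h.of_comp_right hsurj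

theorem range_coprodLift_zpowers (x y : G) :
    (Monoid.Coprod.lift (Subgroup.zpowers x).subtype (Subgroup.zpowers y).subtype).range =
      Subgroup.closure {x, y} := by
  simp [Monoid.Coprod.range_lift, Subgroup.zpowers_eq_closure, ← Subgroup.closure_union,
    Set.pair_comm]

/-- The isomorphism with the free group of rank two of the subgroup generated by a free pair. -/
noncomputable def closurePairEquivFreeGroup {x y : G}
    (h : Function.Injective (FreeGroup.lift ![x, y])) :
    Subgroup.closure {x, y} ≃* FreeGroup (Fin 2) :=
  (MulEquiv.subgroupCongr (by simp [FreeGroup.range_lift_eq_closure, Set.pair_comm])).trans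
    (MonoidHom.ofInjective h).symm

theorem closure_pair_eq_closure_inv_mul (A B : G) :
    Subgroup.closure {A, B} = Subgroup.closure {A⁻¹ * B, A⁻¹ * B * A} := by
  have fst_mem (x y : G) : x ∈ Subgroup.closure {x, y} :=
    Subgroup.subset_closure (Set.mem_insert x {y})
  have snd_mem (x y : G) : y ∈ Subgroup.closure {x, y} :=
    Subgroup.subset_closure (Set.mem_insert_of_mem x rfl)
  apply le_antisymm <;> rw [Subgroup.closure_le, Set.pair_subset_iff]
  · have hA : A ∈ Subgroup.closure {A⁻¹ * B, A⁻¹ * B * A} := by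
      simpa [mul_assoc] using mul_mem (inv_mem (fst_mem (A⁻¹ * B) (A⁻¹ * B * A))) (snd_mem _ _)
    exact ⟨hA, by simpa using mul_mem hA (fst_mem (A⁻¹ * B) (A⁻¹ * B * A))⟩
  · have ht : A⁻¹ * B ∈ Subgroup.closure {A, B} := mul_mem (inv_mem (fst_mem A B)) (snd_mem A B)
    exact ⟨ht, mul_mem ht (fst_mem A B)⟩

end FreeProducts

section LinearActions

theorem zpow_smul_of_transvection {G V R : Type*} [Group G] [AddCommGroup V] [MulAction G V]
    [Ring R] [Module R V] {g : G}
    {φ : Module.Dual R V} {u : V} (hu : φ u = 0) (hg : ∀ x, g • x = x + φ x • u) (n : ℤ) (x : V) :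
    g ^ n • x = x + n • φ x • u := by
  have hinv (x : V) : g⁻¹ • x = x - φ x • u := by
    simp [inv_smul_eq_iff, hg, hu]
  induction n with
  | zero => simp
  | succ n ih =>
    rw [add_comm, _root_.zpow_one_add, mul_smul, ih, hg]
    simp [hu, add_smul]
    abel
  | pred n ih =>
    rw [sub_eq_neg_add, _root_.zpow_add, mul_smul, ih, _root_.zpow_neg_one, hinv]
    simp [hu, add_smul]
    abel

theorem pow_smul_mem_of_quasiperiodic {M V : Type*} [Monoid M] [AddMonoid V]
    [DistribMulAction M V] {C : Set V} {g : M} {z v : V} {N : ℕ} (hN : N ≠ 0)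
    (hv : ∀ y ∈ C, y + v ∈ C) (hgv : g • v = v) (hperiod : g ^ N • z = z + v)
    (hz : ∀ m, 1 ≤ m → m ≤ N → g ^ m • z ∈ C)
    {m : ℕ} (hm : 1 ≤ m) : g ^ m • z ∈ C := by
  induction m using Nat.strong_induction_on with
  | h m ih =>
    obtain hmN | hNm := le_or_gt m N
    · exact hz m hm hmN
    · obtain ⟨k, rfl⟩ := Nat.exists_eq_add_of_lt hNm
      have hfix : g ^ (k + 1) • v = v := (MulAction.stabilizerSubmonoid M v).pow_mem hgv _
      have hsplit : g ^ (N + k + 1) • z = g ^ (k + 1) • z + v := by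
        rw [add_assoc, add_comm, pow_add, mul_smul, hperiod, smul_add, hfix]
      rw [hsplit]
      exact hv _ (ih (k + 1) (by lia) (by lia))

end LinearActions

namespace HypergeometricGroup

/-- The linear involution of `ℤ⁶` conjugating `-B` and `A⁻¹B` to their inverses. -/
def reversal : GL (Fin 6) ℤ :=
  let M := !![0,0,0,0,-1,3; 0,0,0,-1,0,5; 0,0,-1,0,0,6; 0,-1,0,0,0,5; -1,0,0,0,0,3; 0,0,0,0,0,1]
  ⟨M, M, by decide +kernel, by decide +kernel⟩

/-- The matrix `-B`, used instead of `B` because `g` vanishes at `-1`, so that it is `-B` which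
has the eigenvalue `1`. -/
def negCompanionG : GL (Fin 6) ℤ where
  val := -companionG
  inv := reversal * -companionG * reversal
  val_inv := by decide +kernel
  inv_val := by decide +kernel

/-- The direction of the transvection `A⁻¹B`. -/
def transvectionVector : Fin 6 → ℤ := ![-9, 10, -26, 10, -9, 0]

/-- The transvection `x ↦ x + x₅ u` of `ℤ⁶`, which is `A⁻¹B`. -/
def transvection : GL (Fin 6) ℤ where
  val := 1 + vecMulVec transvectionVector (Pi.single 5 1)
  inv := 1 - vecMulVec transvectionVector (Pi.single 5 1)
  val_inv := by decide +kernel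
  inv_val := by decide +kernel

/-- The eigenvector of `-B` for the eigenvalue `1`; since `-1` is a double root of `g`, the
twelfth power of `-B` moves every vector by a multiple of it. -/
def periodVector : Fin 6 → ℤ := ![1, 2, 3, 3, 2, 1]

/-- The `-B`-invariant functional measuring how far `(-B)¹²` moves a vector along
`periodVector`. -/
def drift (x : Fin 6 → ℤ) : ℤ := -x 0 + x 1 - x 2 + x 3 - x 4 + x 5

theorem semiconjBy_reversal_negCompanionG :
    SemiconjBy reversal negCompanionG negCompanionG⁻¹ := by
  apply Units.ext
  decide +kernel

theorem semiconjBy_reversal_transvection :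
    SemiconjBy reversal transvection transvection⁻¹ := by
  apply Units.ext
  decide +kernel

theorem reversal_mul_reversal : reversal * reversal = 1 := by
  apply Units.ext
  decide +kernel

theorem reversal_smul (x : Fin 6 → ℤ) : reversal • x =
    ![3 * x 5 - x 4, 5 * x 5 - x 3, 6 * x 5 - x 2, 5 * x 5 - x 1, 3 * x 5 - x 0, x 5] := by
  ext i
  fin_cases i <;> simp [Units.smul_def, reversal, mulVec, dotProduct, Fin.sum_univ_six] <;> ring

theorem negCompanionG_smul (x : Fin 6 → ℤ) : negCompanionG • x =
    ![x 5, 3 * x 5 - x 0, 5 * x 5 - x 1, 6 * x 5 - x 2, 5 * x 5 - x 3, 3 * x 5 - x 4] := by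
  ext i
  fin_cases i <;>
    simp [Units.smul_def, negCompanionG, companionG, mulVec, dotProduct, Fin.sum_univ_six] <;> ring

theorem transvection_zpow_smul (n : ℤ) (x : Fin 6 → ℤ) :
    transvection ^ n • x = x + (n * x 5) • transvectionVector := by
  have hone (x : Fin 6 → ℤ) : transvection • x = x + x 5 • transvectionVector := by
    simp [Units.smul_def, transvection, add_mulVec, vecMulVec_mulVec]
  rw [zpow_smul_of_transvection (R := ℤ) (φ := LinearMap.proj 5) (by simp [transvectionVector])
    hone, LinearMap.proj_apply, smul_smul]

theorem negCompanionG_pow_six_smul (x : Fin 6 → ℤ) : negCompanionG ^ 6 • x =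
    ![x 5 * 3 - x 4 * 2 + x 3 * 3 - x 2 * 4 + x 1 * 3 - x 0,
      x 5 * 7 - x 4 * 3 + x 3 * 5 - x 2 * 9 + x 1 * 8 - x 0 * 3,
      x 5 * 12 - x 4 * 5 + x 3 * 6 - x 2 * 12 + x 1 * 12 - x 0 * 5,
      x 5 * 13 - x 4 * 6 + x 3 * 6 - x 2 * 12 + x 1 * 13 - x 0 * 6,
      x 5 * 9 - x 4 * 4 + x 3 * 3 - x 2 * 7 + x 1 * 9 - x 0 * 5,
      x 5 * 5 - x 4 * 3 + x 3 * 2 - x 2 * 3 + x 1 * 4 - x 0 * 3] := by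
  simp only [pow_succ', pow_zero, mul_one, mul_smul, negCompanionG_smul, cons_val]
  ring_nf

theorem negCompanionG_smul_periodVector : negCompanionG • periodVector = periodVector := by
  decide +kernel

theorem negCompanionG_pow_twelve_smul (x : Fin 6 → ℤ) :
    negCompanionG ^ 12 • x = x + (6 * drift x) • periodVector := by
  rw [show 12 = 6 + 6 from rfl, pow_add, mul_smul,
    negCompanionG_pow_six_smul (negCompanionG ^ 6 • x), negCompanionG_pow_six_smul x]
  ext i
  fin_cases i <;> simp [periodVector, drift] <;> ring

theorem reversal_smul_periodVector : reversal • periodVector = periodVector := by decide +kernel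

/-- Half of the inequalities cutting out `cone`; the other half are their images under
`reversal`. -/
def halfCone : ConvexCone ℤ (Fin 6 → ℤ) where
  carrier := {x | 0 < ∑ i, x i ∧ 0 ≤
    !![-12,  3, -2,  3, -12, 191;
       -10,  1,  0, -1,  10,  45;
        -2, -1,  0,  1,   2,   3;
        -7, -1,  1, -1,  -7,  63;
        -3,  5, -3,  0,   0, 102;
         0,  0,  3, 13, -50, 152;
        -2,  9,  0, -9, -19, 149;
       -17,  0,  2,  0,  -2, 115] *ᵥ x}
  smul_mem' c hc x hx := by
    simpa only [Set.mem_ofPred_eq, Pi.smul_apply, ← Finset.smul_sum, mulVec_smul] using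
      And.intro (smul_pos hc hx.1) (smul_nonneg hc.le hx.2)
  add_mem' x hx y hy := by
    simpa only [Set.mem_ofPred_eq, Pi.add_apply, Finset.sum_add_distrib, mulVec_add] using
      And.intro (add_pos hx.1 hy.1) (add_nonneg hx.2 hy.2)

theorem mem_halfCone {x : Fin 6 → ℤ} : x ∈ halfCone ↔
    0 < x 0 + x 1 + x 2 + x 3 + x 4 + x 5 ∧
    0 ≤ -12 * x 0 + 3 * x 1 - 2 * x 2 + 3 * x 3 - 12 * x 4 + 191 * x 5 ∧
    0 ≤ -10 * x 0 + x 1 - x 3 + 10 * x 4 + 45 * x 5 ∧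
    0 ≤ -2 * x 0 - x 1 + x 3 + 2 * x 4 + 3 * x 5 ∧
    0 ≤ -7 * x 0 - x 1 + x 2 - x 3 - 7 * x 4 + 63 * x 5 ∧
    0 ≤ -3 * x 0 + 5 * x 1 - 3 * x 2 + 102 * x 5 ∧
    0 ≤ 3 * x 2 + 13 * x 3 - 50 * x 4 + 152 * x 5 ∧
    0 ≤ -2 * x 0 + 9 * x 1 - 9 * x 3 - 19 * x 4 + 149 * x 5 ∧
    0 ≤ -17 * x 0 + 2 * x 2 - 2 * x 4 + 115 * x 5 := by
  change 0 < ∑ i, x i ∧ (∀ i, 0 ≤ ∑ j, _ * x j) ↔ _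
  simp only [Fin.sum_univ_six, Fin.forall_fin_succ, of_apply, cons_val_zero, cons_val_succ,
    cons_val]
  constructor <;> (intro h; split_ands <;> first | linarith | (intro i; exact i.elim0))

/-- A `reversal`-invariant polyhedral cone into which every nonzero power of the transvection,
followed by a nonzero power of `-B`, maps it up to sign. -/
noncomputable def cone : ConvexCone ℤ (Fin 6 → ℤ) :=
  halfCone ⊓ halfCone.comap (DistribSMul.toLinearMap ℤ (Fin 6 → ℤ) reversal)

theorem mem_cone {x : Fin 6 → ℤ} : x ∈ cone ↔ x ∈ halfCone ∧ reversal • x ∈ halfCone :=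
  Iff.rfl

theorem reversal_smul_mem_cone {x : Fin 6 → ℤ} : reversal • x ∈ cone ↔ x ∈ cone := by
  rw [mem_cone, mem_cone, smul_smul, reversal_mul_reversal, one_smul, and_comm]

theorem sum_reversal_smul (x : Fin 6 → ℤ) : ∑ i, (reversal • x) i = 24 * x 5 - ∑ i, x i := by
  rw [reversal_smul]
  simp [Fin.sum_univ_six]
  ring

theorem sum_pos_of_mem_cone {x : Fin 6 → ℤ} (hx : x ∈ cone) : 0 < ∑ i, x i := hx.1.1

theorem sum_lt_of_mem_cone {x : Fin 6 → ℤ} (hx : x ∈ cone) : ∑ i, x i < 24 * x 5 := by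
  have h := sum_pos_of_mem_cone (reversal_smul_mem_cone.2 hx)
  rwa [sum_reversal_smul, sub_pos] at h

theorem apply_five_pos_of_mem_cone {x : Fin 6 → ℤ} (hx : x ∈ cone) : 0 < x 5 := by
  linarith [sum_pos_of_mem_cone hx, sum_lt_of_mem_cone hx]

theorem periodVector_mem_cone : periodVector ∈ cone := by
  rw [mem_cone, reversal_smul, mem_halfCone, mem_halfCone]
  decide +kernel

theorem drift_reversal_smul (x : Fin 6 → ℤ) : drift (reversal • x) = -drift x := by
  simp only [drift, reversal_smul, cons_val]
  ring

theorem reversal_smul_negCompanionG_pow_smul {m n : ℕ} (hmn : m + n = 12) (z : Fin 6 → ℤ) :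
    reversal • negCompanionG ^ m • z =
      negCompanionG ^ n • reversal • z + (6 * drift z) • periodVector := by
  have hfix : negCompanionG ^ m • periodVector = periodVector :=
    (MulAction.stabilizer _ periodVector).pow_mem negCompanionG_smul_periodVector m
  have hrev : negCompanionG ^ m * reversal * negCompanionG ^ m = reversal := by
    rw [mul_assoc, (semiconjBy_reversal_negCompanionG.pow_right m).eq, inv_pow, mul_inv_cancel_left]
  apply smul_left_cancel (negCompanionG ^ m)
  rw [smul_add, smul_comm _ (6 * drift z), hfix, smul_smul, smul_smul, smul_smul, hrev, ← pow_add,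
    hmn, negCompanionG_pow_twelve_smul, drift_reversal_smul, mul_neg, neg_smul,
    neg_add_cancel_right]

theorem negCompanionG_pow_smul_mem_cone_of_drift_pos {z : Fin 6 → ℤ} (hz : 0 < drift z)
    (hfst : ∀ m, 1 ≤ m → m ≤ 6 → negCompanionG ^ m • z ∈ cone)
    (hsnd : ∀ m, m ≤ 5 →
      negCompanionG ^ m • reversal • z + (6 * drift z) • periodVector ∈ cone)
    {m : ℕ} (hm : 1 ≤ m) : negCompanionG ^ m • z ∈ cone := by
  refine pow_smul_mem_of_quasiperiodic (C := cone) (by decide)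
    (fun y hy => cone.add_mem hy (cone.smul_mem (by linarith) periodVector_mem_cone)) ?_
    (negCompanionG_pow_twelve_smul z) (fun m h1 h12 => ?_) hm
  · rw [smul_comm, negCompanionG_smul_periodVector]
  · obtain h6 | h6 := le_or_gt m 6
    · exact hfst m h1 h6
    · rw [SetLike.mem_coe, ← reversal_smul_mem_cone,
        reversal_smul_negCompanionG_pow_smul (Nat.add_sub_of_le h12)]
      exact hsnd (12 - m) (by lia)

theorem negCompanionG_pow_smul_transvectionVector_mem_cone {m : ℕ} (hm : 1 ≤ m) :
    negCompanionG ^ m • transvectionVector ∈ cone := by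
  refine negCompanionG_pow_smul_mem_cone_of_drift_pos (by decide +kernel)
    (fun i h1 h6 => ?_) (fun i h5 => ?_) hm
  all_goals
    rw [mem_cone, reversal_smul, mem_halfCone, mem_halfCone]
    interval_cases i <;> decide +kernel

set_option maxHeartbeats 2000000 in
-- There are 24 vectors to test against the 18 inequalities of the cone.
theorem negCompanionG_pow_smul_add_sub_mem_cone {x : Fin 6 → ℤ} (hx : x ∈ cone) {m : ℕ}
    (hm : 1 ≤ m) :
    negCompanionG ^ m • (x 5 • transvectionVector + x) ∈ cone ∧
      negCompanionG ^ m • (x 5 • transvectionVector - x) ∈ cone := by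
  rw [mem_cone, reversal_smul, mem_halfCone, mem_halfCone] at hx
  simp only [cons_val] at hx
  obtain ⟨⟨_, _, _, _, _, _, _, _, _⟩, _, _, _, _, _, _, _, _, _⟩ := hx
  constructor <;>
    refine negCompanionG_pow_smul_mem_cone_of_drift_pos ?_ (fun i h1 h6 => ?_) (fun i h5 => ?_) hm
  any_goals
    simp only [drift, Pi.add_apply, Pi.sub_apply, Pi.smul_apply, smul_eq_mul, transvectionVector,
      cons_val]
    linarith
  all_goals
    -- Normalizing the coordinates first keeps the certificates of `linarith` small.
    interval_cases i <;>
      simp only [pow_succ', pow_zero, one_smul, mul_one, mul_smul, negCompanionG_smul,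
        reversal_smul, Pi.add_apply, Pi.sub_apply, smul_eq_mul, drift,
        transvectionVector, periodVector, smul_cons, smul_empty, cons_add_cons, empty_add_empty,
        cons_val] <;>
      ring_nf <;>
      simp only [mem_cone, reversal_smul, mem_halfCone, cons_val] <;>
      split_ands <;> linarith

theorem negCompanionG_pow_smul_smul_add_mem_cone {x : Fin 6 → ℤ} {c k : ℤ} {m : ℕ} (hm : 1 ≤ m)
    (hck : c ≤ k) (hc : negCompanionG ^ m • (c • transvectionVector + x) ∈ cone) :
    negCompanionG ^ m • (k • transvectionVector + x) ∈ cone := by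
  obtain rfl | hlt := hck.eq_or_lt
  · exact hc
  · have hu := negCompanionG_pow_smul_transvectionVector_mem_cone hm
    have h := cone.add_mem (cone.smul_mem (sub_pos.2 hlt) hu) hc
    rwa [← smul_comm (negCompanionG ^ m), ← smul_add, ← add_assoc, ← add_smul,
      sub_add_cancel] at h

/-- The set of the ping-pong argument: the powers of the transvection move it off itself, and
those of `-B` move it back. -/
def pingPongSet : Set (Fin 6 → ℤ) := cone ∪ -cone

theorem mem_pingPongSet {x : Fin 6 → ℤ} : x ∈ pingPongSet ↔ x ∈ cone ∨ -x ∈ cone := Iff.rfl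

theorem neg_mem_pingPongSet {x : Fin 6 → ℤ} : -x ∈ pingPongSet ↔ x ∈ pingPongSet := by
  rw [mem_pingPongSet, mem_pingPongSet, neg_neg, or_comm]

theorem reversal_smul_mem_pingPongSet {x : Fin 6 → ℤ} :
    reversal • x ∈ pingPongSet ↔ x ∈ pingPongSet := by
  simp only [mem_pingPongSet, ← smul_neg, reversal_smul_mem_cone]

theorem negCompanionG_pow_smul_transvection_zpow_smul_mem {x : Fin 6 → ℤ} (hx : x ∈ pingPongSet)
    {m : ℕ} (hm : 1 ≤ m) {n : ℤ} (hn : n ≠ 0) :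
    negCompanionG ^ m • transvection ^ n • x ∈ pingPongSet := by
  wlog hC : x ∈ cone generalizing x
  · have h := this (neg_mem_pingPongSet.2 hx) (hx.resolve_left hC)
    rwa [smul_neg, smul_neg, neg_mem_pingPongSet] at h
  obtain ⟨hadd, hsub⟩ := negCompanionG_pow_smul_add_sub_mem_cone hC hm
  have h5 := apply_five_pos_of_mem_cone hC
  rw [transvection_zpow_smul, mem_pingPongSet]
  obtain hneg | hpos := hn.lt_or_gt
  · right
    rw [← smul_neg, neg_add_rev, ← neg_smul]
    exact negCompanionG_pow_smul_smul_add_mem_cone hm (c := x 5) (by nlinarith)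
      (by rwa [← sub_eq_add_neg])
  · left
    rw [add_comm]
    exact negCompanionG_pow_smul_smul_add_mem_cone hm (by nlinarith) hadd

theorem negCompanionG_zpow_smul_transvection_zpow_smul_mem {x : Fin 6 → ℤ}
    (hx : x ∈ pingPongSet) {m n : ℤ} (hm : m ≠ 0) (hn : n ≠ 0) :
    negCompanionG ^ m • transvection ^ n • x ∈ pingPongSet := by
  obtain ⟨k, rfl | rfl⟩ := m.eq_nat_or_neg
  · rw [zpow_natCast]
    exact negCompanionG_pow_smul_transvection_zpow_smul_mem hx (by lia) hn
  · have hconj : reversal * (negCompanionG ^ (-k : ℤ) * transvection ^ n) =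
        negCompanionG ^ k * transvection ^ (-n) * reversal := by
      simpa using ((semiconjBy_reversal_negCompanionG.zpow_right (-k)).mul_right
        (semiconjBy_reversal_transvection.zpow_right n)).eq
    rw [← reversal_smul_mem_pingPongSet, smul_smul, smul_smul, mul_assoc, hconj, mul_smul, mul_smul]
    exact negCompanionG_pow_smul_transvection_zpow_smul_mem
      (reversal_smul_mem_pingPongSet.2 hx) (by lia) (neg_ne_zero.2 hn)

theorem neg_negCompanionG_zpow_smul_pingPongSet_subset {m n : ℤ} (hm : m ≠ 0) (hn : n ≠ 0) :
    (-negCompanionG) ^ m • transvection ^ n • pingPongSet ⊆ pingPongSet := by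
  rw [Set.smul_set_subset_iff]
  rintro _ ⟨x, hx, rfl⟩
  have hmem := negCompanionG_zpow_smul_transvection_zpow_smul_mem hx hm hn
  obtain heven | hodd := m.even_or_odd
  · rwa [heven.neg_zpow]
  · rwa [hodd.neg_zpow, Units.neg_smul, neg_mem_pingPongSet]

theorem sum_transvection_zpow_smul (n : ℤ) (x : Fin 6 → ℤ) :
    ∑ i, (transvection ^ n • x) i = ∑ i, x i - 24 * (n * x 5) := by
  rw [transvection_zpow_smul]
  simp [Finset.sum_add_distrib, transvectionVector, Fin.sum_univ_six]
  ring

theorem transvection_zpow_smul_apply_five (n : ℤ) (x : Fin 6 → ℤ) :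
    (transvection ^ n • x) 5 = x 5 := by
  simp [transvection_zpow_smul, transvectionVector]

theorem transvection_zpow_smul_notMem_pingPongSet {x : Fin 6 → ℤ} (hx : x ∈ pingPongSet) {n : ℤ}
    (hn : n ≠ 0) : transvection ^ n • x ∉ pingPongSet := by
  wlog hC : x ∈ cone generalizing x
  · have h := this (neg_mem_pingPongSet.2 hx) (hx.resolve_left hC)
    rwa [smul_neg, neg_mem_pingPongSet] at h
  -- On the cone `(∑ i, x i) / (24 * x 5)` lies in `(0, 1)`; `transvection ^ n` shifts it
  -- by `-n`.
  have hpos := sum_pos_of_mem_cone hC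
  have hlt := sum_lt_of_mem_cone hC
  rintro (hy | hy)
  · have hpos' := sum_pos_of_mem_cone hy
    have hlt' := sum_lt_of_mem_cone hy
    rw [sum_transvection_zpow_smul] at hpos' hlt'
    rw [transvection_zpow_smul_apply_five] at hlt'
    obtain hneg | hn := hn.lt_or_gt <;> nlinarith
  · have h5 := apply_five_pos_of_mem_cone hy
    rw [Pi.neg_apply, transvection_zpow_smul_apply_five] at h5
    linarith

theorem disjoint_transvection_zpow_smul_pingPongSet {n : ℤ} (hn : n ≠ 0) :
    Disjoint (transvection ^ n • pingPongSet) pingPongSet := by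
  rw [Set.disjoint_left]
  rintro _ ⟨x, hx, rfl⟩
  exact transvection_zpow_smul_notMem_pingPongSet hx hn

theorem injective_freeGroupLift_transvection :
    Function.Injective (FreeGroup.lift ![transvection, -negCompanionG]) :=
  injective_freeGroupLift_pair_of_ping_pong ⟨periodVector, .inl periodVector_mem_cone⟩
    (fun _ => disjoint_transvection_zpow_smul_pingPongSet)
    (fun _ _ => neg_negCompanionG_zpow_smul_pingPongSet_subset)

theorem injective_freeGroupLift_companions {A B : GL (Fin 6) ℤ} (hA : A.val = companionF)
    (hB : B.val = companionG) : Function.Injective (FreeGroup.lift ![A⁻¹ * B, A⁻¹ * B * A]) := by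
  have hBneg : B = -negCompanionG := Units.ext <| by simp [hB, negCompanionG]
  have hT : A⁻¹ * B = transvection := by
    rw [inv_mul_eq_iff_eq_mul]
    apply Units.ext
    rw [hB, Units.val_mul, hA]
    decide +kernel
  have hA' : A = B * transvection⁻¹ := by
    rw [← hT]
    simp
  have h := injective_freeGroupLift_conj injective_freeGroupLift_transvection transvection
  convert h using 3
  ext i : 1
  fin_cases i
  · simp [hT]
  · simp [hA', hBneg, mul_assoc]
end HypergeometricGroup

/-- The hypergeometric group with `α = (0,0,0,0,0,0)`, `β = (1/2,1/2,1/3,2/3,1/4,3/4)` is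
free of rank two: `t = A⁻¹B` and `r = A⁻¹BA` have infinite order, generate the group
generated by `A` and `B`, and the group is the internal free product of `⟨t⟩` and `⟨r⟩`;
in particular it is isomorphic to `ℤ * ℤ`, the free group of rank `2`. -/
theorem hypergeometric_free_of_rank_two
    (A B : GL (Fin 6) ℤ)
    (hA : (A : Matrix (Fin 6) (Fin 6) ℤ) = companionF)
    (hB : (B : Matrix (Fin 6) (Fin 6) ℤ) = companionG) :
    ¬ IsOfFinOrder (A⁻¹ * B) ∧ ¬ IsOfFinOrder (A⁻¹ * B * A) ∧
    Subgroup.closure {A, B} = Subgroup.closure {A⁻¹ * B, A⁻¹ * B * A} ∧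
    Function.Injective
      (Monoid.Coprod.lift (Subgroup.zpowers (A⁻¹ * B)).subtype
        (Subgroup.zpowers (A⁻¹ * B * A)).subtype) ∧
    (Monoid.Coprod.lift (Subgroup.zpowers (A⁻¹ * B)).subtype
        (Subgroup.zpowers (A⁻¹ * B * A)).subtype).range = Subgroup.closure {A, B} ∧
    Nonempty ((Subgroup.closure {A, B} : Subgroup (GL (Fin 6) ℤ)) ≃* FreeGroup (Fin 2)) := by
  have hfree := HypergeometricGroup.injective_freeGroupLift_companions hA hB
  have hclosure := closure_pair_eq_closure_inv_mul A B
  refine ⟨not_isOfFinOrder_of_injective_freeGroupLift hfree 0,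
    not_isOfFinOrder_of_injective_freeGroupLift hfree 1, hclosure,
    injective_coprodLift_zpowers hfree, (range_coprodLift_zpowers _ _).trans hclosure.symm, ?_⟩
  rw [hclosure]
  exact ⟨closurePairEquivFreeGroup hfree⟩
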